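/- arXiv:1408.5537 — 4 statements merged into one kernel-verified Lean document; each statement's English description precedes it below -/
import Mathlib

section
/- Let b > 0, γ = 1 + 16b/3, and let ω = (ω₀, ω₁) ∈ Ω. Then E(φ_ω) = −(ω₁/2)·Q₁(φ_ω). -/
/-!
Write `f = φ̃²`, `s = 4ω₀ - ω₁²`, `γ = 1 + 16b/3`. Then `f = 2s / D` with
`D = -ω₁ + √(ω₁² + γ s) cosh(√s x)`, and the identity `cosh² - sinh² = 1` gives the first integral
`f'² = s f² + ω₁ f³ - (γ/4) f⁴` (`sqProfileDeriv_sq`) together with the second-order equation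
`f'' = s f + (3/2) ω₁ f² - (γ/2) f³` (`hasDerivAt_sqProfileDeriv`).

The phase of `φ` has derivative `ω₁/2 - f/4`, so every density in `E` and `Q₁` can be expressed
through `f`: `|φ|² = f`, `Re (i φ' φ̄) = f²/4 - (ω₁/2) f` (`momentum_density`), and, by the first
integral, `|φ'|² = ω₀ f - (b/3) f³` (`norm_deriv_phi_sq`). With these,
`E(φ) + (ω₁/2) Q₁(φ) = (1/8) ∫ f''`, and the last integral is zero because `f'` vanishes at `±∞`
(`integral_sqProfile_identity`). All integrability statements follow from
`0 < f ≤ C / (1 + x²)` and `|f'| ≤ M f`.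
-/

open MeasureTheory

noncomputable section

/-- γ = 1 + 16b/3 -/
def gam (b : ℝ) : ℝ := 1 + 16 * b / 3

/-- The real-valued profile ˜φ_ω. -/
def phit (b ω₀ ω₁ x : ℝ) : ℝ :=
  Real.sqrt (2 * (4 * ω₀ - ω₁ ^ 2) /
    (-ω₁ + Real.sqrt (ω₁ ^ 2 + gam b * (4 * ω₀ - ω₁ ^ 2)) *
      Real.cosh (Real.sqrt (4 * ω₀ - ω₁ ^ 2) * x)))

/-- The complex-valued solitary wave profile φ_ω. -/
def phi (b ω₀ ω₁ : ℝ) (x : ℝ) : ℂ :=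
  (phit b ω₀ ω₁ x : ℂ) *
    Complex.exp (Complex.I * (ω₁ / 2) * x -
      (Complex.I / 4) * ((∫ η in Set.Iic x, (phit b ω₀ ω₁ η) ^ 2) : ℝ))

/-- Q₀(v) = (1/2)∫|v|². -/
def Q0 (v : ℝ → ℂ) : ℝ := (1 / 2) * ∫ x : ℝ, ‖v x‖ ^ 2

/-- Q₁(v) = (1/2) Re ∫ i v' conj v. -/
def Q1 (v : ℝ → ℂ) : ℝ :=
  (1 / 2) * (∫ x : ℝ, Complex.I * deriv v x * (starRingEnd ℂ) (v x)).re

/-- P(v) = Re ∫ i |v|² v' conj v. -/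
def Pfun (v : ℝ → ℂ) : ℝ :=
  (∫ x : ℝ, Complex.I * (‖v x‖ : ℂ) ^ 2 * deriv v x * (starRingEnd ℂ) (v x)).re

/-- The energy E. -/
def Efun (b : ℝ) (v : ℝ → ℂ) : ℝ :=
  (1 / 2) * (∫ x : ℝ, ‖deriv v x‖ ^ 2) - (1 / 4) * Pfun v -
    (b / 6) * ∫ x : ℝ, ‖v x‖ ^ 6

/-- L_ω(v). -/
def Lfun (ω₀ ω₁ : ℝ) (v : ℝ → ℂ) : ℝ :=
  (∫ x : ℝ, ‖deriv v x‖ ^ 2) + ω₀ * (∫ x : ℝ, ‖v x‖ ^ 2) +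
    ω₁ * (∫ x : ℝ, Complex.I * deriv v x * (starRingEnd ℂ) (v x)).re

/-- The action S_ω. -/
def Sfun (b ω₀ ω₁ : ℝ) (v : ℝ → ℂ) : ℝ :=
  (1 / 2) * Lfun ω₀ ω₁ v - (1 / 4) * Pfun v - (b / 6) * ∫ x : ℝ, ‖v x‖ ^ 6

/-- The Nehari functional K_ω. -/
def Kfun (b ω₀ ω₁ : ℝ) (v : ℝ → ℂ) : ℝ :=
  Lfun ω₀ ω₁ v - Pfun v - b * ∫ x : ℝ, ‖v x‖ ^ 6

/-- v ∈ H¹(ℝ): v differentiable with v and v' square-integrable. -/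
def H1 (v : ℝ → ℂ) : Prop :=
  Differentiable ℝ v ∧ Integrable (fun x : ℝ => ‖v x‖ ^ 2) ∧
    Integrable (fun x : ℝ => ‖deriv v x‖ ^ 2)

/-- The function g from Remark 1. -/
def gfun (b ξ : ℝ) : ℝ :=
  (2 * (gam b - 1) / ξ) * Real.arctan ((1 + Real.sqrt (1 + ξ ^ 2)) / ξ)

/-- The squared profile `f = φ̃²`, with `s = 4ω₀ - ω₁²`, `w = ω₁` and `g = γ`. -/
def sqProfile (s w g x : ℝ) : ℝ :=
  2 * s / (-w + Real.sqrt (w ^ 2 + g * s) * Real.cosh (Real.sqrt s * x))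

/-- The derivative of `sqProfile`. -/
def sqProfileDeriv (s w g x : ℝ) : ℝ :=
  -(2 * s * (Real.sqrt (w ^ 2 + g * s) * (Real.sinh (Real.sqrt s * x) * Real.sqrt s))) /
    (-w + Real.sqrt (w ^ 2 + g * s) * Real.cosh (Real.sqrt s * x)) ^ 2

/-! ### The squared profile -/

section Profile

variable {s w g : ℝ}

lemma abs_lt_sqrt_amp (hs : 0 < s) (hg : 0 < g) : |w| < Real.sqrt (w ^ 2 + g * s) := by
  rw [← Real.sqrt_sq_eq_abs]
  exact Real.sqrt_lt_sqrt (sq_nonneg w) (by nlinarith [mul_pos hg hs])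

lemma denom_pos (hs : 0 < s) (hg : 0 < g) (x : ℝ) :
    0 < -w + Real.sqrt (w ^ 2 + g * s) * Real.cosh (Real.sqrt s * x) := by
  have h1 := abs_lt_sqrt_amp (w := w) hs hg
  have h2 := Real.one_le_cosh (Real.sqrt s * x)
  have h3 := le_abs_self w
  have h4 := Real.sqrt_nonneg (w ^ 2 + g * s)
  nlinarith

lemma sqProfile_pos (hs : 0 < s) (hg : 0 < g) (x : ℝ) : 0 < sqProfile s w g x :=
  div_pos (by linarith) (denom_pos hs hg x)

lemma hasDerivAt_denom (x : ℝ) :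
    HasDerivAt (fun x => -w + Real.sqrt (w ^ 2 + g * s) * Real.cosh (Real.sqrt s * x))
      (Real.sqrt (w ^ 2 + g * s) * (Real.sinh (Real.sqrt s * x) * Real.sqrt s)) x := by
  have h : HasDerivAt (fun x => Real.sqrt s * x) (Real.sqrt s) x := by
    simpa using (hasDerivAt_id x).const_mul (Real.sqrt s)
  exact (h.cosh.const_mul _).const_add _

lemma hasDerivAt_sqProfile (hs : 0 < s) (hg : 0 < g) (x : ℝ) :
    HasDerivAt (sqProfile s w g) (sqProfileDeriv s w g x) x := by
  have h := (hasDerivAt_const x (2 * s)).div (hasDerivAt_denom (s := s) (w := w) (g := g) x)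
    (denom_pos hs hg x).ne'
  refine HasDerivAt.congr_deriv (f := sqProfile s w g) h ?_
  simp [sqProfileDeriv]

/-- The second-order equation satisfied by `f = φ̃²`. -/
lemma hasDerivAt_sqProfileDeriv (hs : 0 < s) (hg : 0 < g) (x : ℝ) :
    HasDerivAt (sqProfileDeriv s w g) (s * sqProfile s w g x + 3 / 2 * w * sqProfile s w g x ^ 2
      - g / 2 * sqProfile s w g x ^ 3) x := by
  have h : HasDerivAt (fun x => Real.sqrt s * x) (Real.sqrt s) x := by
    simpa using (hasDerivAt_id x).const_mul (Real.sqrt s)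
  have hD := denom_pos (w := w) hs hg x
  have h2 := ((((h.sinh.mul_const (Real.sqrt s)).const_mul
    (Real.sqrt (w ^ 2 + g * s))).const_mul (2 * s)).neg).div
    ((hasDerivAt_denom (s := s) (w := w) (g := g) x).pow 2) (pow_pos hD 2).ne'
  refine HasDerivAt.congr_deriv (f := sqProfileDeriv s w g) h2 (Eq.symm ?_)
  have hs2 : Real.sqrt s ^ 2 = s := Real.sq_sqrt hs.le
  have hA2 : Real.sqrt (w ^ 2 + g * s) ^ 2 = w ^ 2 + g * s :=
    Real.sq_sqrt (by nlinarith [mul_pos hg hs, sq_nonneg w])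
  have hc := Real.cosh_sq (Real.sqrt s * x)
  simp only [sqProfile, Pi.pow_apply, Pi.neg_apply]
  generalize Real.sqrt (w ^ 2 + g * s) = A at *
  generalize Real.cosh (Real.sqrt s * x) = c at *
  generalize Real.sinh (Real.sqrt s * x) = d at *
  generalize Real.sqrt s = k at *
  have hd : d ^ 2 = c ^ 2 - 1 := by linarith
  obtain ⟨D, hDe⟩ : ∃ D, D = -w + A * c := ⟨_, rfl⟩
  have hAc : A * c = D + w := by linarith
  have hAd : A ^ 2 * d ^ 2 = (D + w) ^ 2 - (w ^ 2 + g * s) := by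
    rw [hd, ← hAc, ← hA2]; ring
  rw [← hDe] at hD ⊢
  have e1 : s * (2 * s / D) + 3 / 2 * w * (2 * s / D) ^ 2 - g / 2 * (2 * s / D) ^ 3
      = (2 * s ^ 2 * D ^ 2 + 6 * w * s ^ 2 * D - 4 * g * s ^ 3) / D ^ 3 := by
    field_simp; ring
  rw [e1, div_eq_div_iff (by positivity) (by positivity)]
  push_cast
  have e2 : -(2 * s * (A * (c * k * k))) = -(2 * s * s * (D + w)) := by
    rw [← hAc, ← hs2]; ring
  have e3 : -(2 * s * (A * (d * k))) * (2 * D ^ (2 - 1) * (A * (d * k)))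
      = -(4 * s * s * D * ((D + w) ^ 2 - (w ^ 2 + g * s))) := by
    rw [← hAd]
    linear_combination (-4 * s * D * A ^ 2 * d ^ 2) * hs2
  rw [e2, e3]
  ring

/-- The first integral of the profile equation. -/
lemma sqProfileDeriv_sq (hs : 0 < s) (hg : 0 < g) (x : ℝ) :
    sqProfileDeriv s w g x ^ 2 = s * sqProfile s w g x ^ 2 + w * sqProfile s w g x ^ 3
      - g / 4 * sqProfile s w g x ^ 4 := by
  have hD := denom_pos (w := w) hs hg x
  have hs2 : Real.sqrt s ^ 2 = s := Real.sq_sqrt hs.le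
  have hA2 : Real.sqrt (w ^ 2 + g * s) ^ 2 = w ^ 2 + g * s :=
    Real.sq_sqrt (by nlinarith [mul_pos hg hs, sq_nonneg w])
  have hc := Real.cosh_sq (Real.sqrt s * x)
  simp only [sqProfile, sqProfileDeriv]
  generalize Real.sqrt (w ^ 2 + g * s) = A at *
  generalize Real.cosh (Real.sqrt s * x) = c at *
  generalize Real.sinh (Real.sqrt s * x) = d at *
  generalize Real.sqrt s = k at *
  have hd : d ^ 2 = c ^ 2 - 1 := by linarith
  obtain ⟨D, hDe⟩ : ∃ D, D = -w + A * c := ⟨_, rfl⟩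
  have hAc : A * c = D + w := by linarith
  have hAd : A ^ 2 * d ^ 2 = (D + w) ^ 2 - (w ^ 2 + g * s) := by
    rw [hd, ← hAc, ← hA2]; ring
  rw [← hDe] at hD ⊢
  have e1 : (-(2 * s * (A * (d * k))) / D ^ 2) ^ 2
      = 4 * s ^ 2 * (k ^ 2) * (A ^ 2 * d ^ 2) / D ^ 4 := by
    field_simp; ring
  rw [e1, hs2, hAd]
  field_simp
  ring

lemma one_add_sq_div_two_le_cosh (y : ℝ) : 1 + y ^ 2 / 2 ≤ Real.cosh y := by
  have h1 : Real.cosh y = 1 + 2 * Real.sinh (y / 2) ^ 2 := by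
    have h := Real.cosh_two_mul (y / 2)
    have h' := Real.cosh_sq (y / 2)
    rw [mul_div_cancel₀ y two_ne_zero] at h
    linarith
  have h2 : |y / 2| ≤ |Real.sinh (y / 2)| := by
    rw [Real.abs_sinh]
    exact Real.self_le_sinh_iff.2 (abs_nonneg _)
  have h3 := sq_le_sq.2 h2
  nlinarith

/-- The quadratic lower bound `1 + y² / 2 ≤ cosh y` replaces the sharp exponential decay. -/
lemma sqProfile_le (hs : 0 < s) (hg : 0 < g) :
    ∃ C, 0 < C ∧ ∀ x, sqProfile s w g x ≤ C * (1 + x ^ 2)⁻¹ := by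
  have hA := abs_lt_sqrt_amp (w := w) hs hg
  have hA0 : 0 < Real.sqrt (w ^ 2 + g * s) := (abs_nonneg w).trans_lt hA
  have hw := le_abs_self w
  set A := Real.sqrt (w ^ 2 + g * s) with hAdef
  set c := min (A - w) (A * s / 2) with hcdef
  have hc : 0 < c := lt_min (by linarith) (by positivity)
  refine ⟨2 * s / c, by positivity, fun x => ?_⟩
  have h1 : c ≤ A - w := min_le_left _ _
  have h2 : c ≤ A * s / 2 := min_le_right _ _
  have hcosh : 1 + (Real.sqrt s * x) ^ 2 / 2 ≤ Real.cosh (Real.sqrt s * x) :=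
    one_add_sq_div_two_le_cosh _
  rw [mul_pow, Real.sq_sqrt hs.le] at hcosh
  have hlow : c * (1 + x ^ 2) ≤ -w + A * Real.cosh (Real.sqrt s * x) := by
    nlinarith [mul_le_mul_of_nonneg_left hcosh hA0.le,
      mul_le_mul_of_nonneg_right h2 (sq_nonneg x)]
  calc sqProfile s w g x ≤ 2 * s / (c * (1 + x ^ 2)) :=
        div_le_div_of_nonneg_left (by positivity) (by positivity) hlow
    _ = 2 * s / c * (1 + x ^ 2)⁻¹ := by field_simp

lemma continuous_sqProfile (hs : 0 < s) (hg : 0 < g) : Continuous (sqProfile s w g) :=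
  continuous_iff_continuousAt.2 fun x => (hasDerivAt_sqProfile hs hg x).continuousAt

lemma continuous_sqProfileDeriv (hs : 0 < s) (hg : 0 < g) : Continuous (sqProfileDeriv s w g) :=
  continuous_iff_continuousAt.2 fun x => (hasDerivAt_sqProfileDeriv hs hg x).continuousAt

lemma sqProfile_bdd (hs : 0 < s) (hg : 0 < g) : ∃ C, 0 < C ∧ ∀ x, sqProfile s w g x ≤ C := by
  obtain ⟨C, hC, h⟩ := sqProfile_le (w := w) hs hg
  refine ⟨C, hC, fun x => (h x).trans (mul_le_of_le_one_right hC.le (inv_le_one_of_one_le₀ ?_))⟩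
  nlinarith [sq_nonneg x]

lemma integrable_sqProfile (hs : 0 < s) (hg : 0 < g) : Integrable (sqProfile s w g) := by
  obtain ⟨C, hC, h⟩ := sqProfile_le (w := w) hs hg
  refine (integrable_inv_one_add_sq.const_mul C).mono'
    (continuous_sqProfile hs hg).aestronglyMeasurable (Filter.Eventually.of_forall fun x => ?_)
  rw [Real.norm_of_nonneg (sqProfile_pos hs hg x).le]
  exact h x

lemma integrable_sqProfile_pow (hs : 0 < s) (hg : 0 < g) (n : ℕ) :
    Integrable (fun x => sqProfile s w g x ^ (n + 1)) := by
  obtain ⟨C, hC, h⟩ := sqProfile_bdd (w := w) hs hg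
  refine ((integrable_sqProfile (w := w) hs hg).const_mul (C ^ n)).mono'
    ((continuous_sqProfile hs hg).pow _).aestronglyMeasurable
    (Filter.Eventually.of_forall fun x => ?_)
  have h0 := (sqProfile_pos (w := w) hs hg x).le
  rw [Real.norm_of_nonneg (pow_nonneg h0 _), pow_succ]
  exact mul_le_mul_of_nonneg_right (pow_le_pow_left₀ h0 (h x) n) h0

/-- The first integral makes `f'` decay at least as fast as `f`. -/
lemma abs_sqProfileDeriv_le (hs : 0 < s) (hg : 0 < g) :
    ∃ M, 0 < M ∧ ∀ x, |sqProfileDeriv s w g x| ≤ M * sqProfile s w g x := by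
  obtain ⟨C, hC, h⟩ := sqProfile_bdd (w := w) hs hg
  have hpos : 0 < s + |w| * C := by positivity
  refine ⟨Real.sqrt (s + |w| * C), Real.sqrt_pos.2 hpos, fun x => ?_⟩
  have h0 := sqProfile_pos (w := w) hs hg x
  refine abs_le_of_sq_le_sq ?_ (by positivity)
  rw [mul_pow, Real.sq_sqrt hpos.le, sqProfileDeriv_sq hs hg x]
  have hle := h x
  generalize sqProfile s w g x = f at *
  have h1 : w * f ≤ |w| * C :=
    mul_le_mul (le_abs_self w) hle h0.le (abs_nonneg w)
  have h2 : 0 ≤ g / 4 * f ^ 4 := by positivity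
  nlinarith [mul_le_mul_of_nonneg_right h1 (sq_nonneg f)]

lemma integrable_sqProfileDeriv (hs : 0 < s) (hg : 0 < g) :
    Integrable (sqProfileDeriv s w g) := by
  obtain ⟨M, hM, h⟩ := abs_sqProfileDeriv_le (w := w) hs hg
  exact ((integrable_sqProfile hs hg).const_mul M).mono'
    (continuous_sqProfileDeriv hs hg).aestronglyMeasurable (Filter.Eventually.of_forall h)

lemma tendsto_sqProfileDeriv (hs : 0 < s) (hg : 0 < g) :
    Filter.Tendsto (sqProfileDeriv s w g) (Filter.cocompact ℝ) (nhds 0) := by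
  obtain ⟨M, hM, h⟩ := abs_sqProfileDeriv_le (w := w) hs hg
  obtain ⟨C, hC, h'⟩ := sqProfile_le (w := w) hs hg
  have hsq : Filter.Tendsto (fun x : ℝ => 1 + x ^ 2) (Filter.cocompact ℝ) Filter.atTop := by
    refine Filter.tendsto_atTop_add_const_left _ _ ?_
    have := (Filter.tendsto_pow_atTop (α := ℝ) two_ne_zero).comp
      (tendsto_norm_cocompact_atTop (E := ℝ))
    simpa [Function.comp_def] using this
  have hlim := (hsq.inv_tendsto_atTop).const_mul (M * C)
  rw [mul_zero] at hlim
  refine squeeze_zero_norm (fun x => (h x).trans ?_) hlim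
  rw [mul_assoc]
  exact mul_le_mul_of_nonneg_left (h' x) hM.le

/-- The integral of `f''` over the line vanishes. -/
lemma integral_sqProfile_identity (hs : 0 < s) (hg : 0 < g) :
    s * (∫ x, sqProfile s w g x) + 3 / 2 * w * (∫ x, sqProfile s w g x ^ 2)
      - g / 2 * (∫ x, sqProfile s w g x ^ 3) = 0 := by
  have i1 := integrable_sqProfile (w := w) hs hg
  have i2 := integrable_sqProfile_pow (w := w) hs hg 1
  have i3 := integrable_sqProfile_pow (w := w) hs hg 2
  have ht := tendsto_sqProfileDeriv (w := w) hs hg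
  have hI := integral_of_hasDerivAt_of_tendsto (fun x => hasDerivAt_sqProfileDeriv (w := w) hs hg x)
    (((i1.const_mul s).add (i2.const_mul (3 / 2 * w))).sub (i3.const_mul (g / 2)))
    (ht.mono_left atBot_le_cocompact) (ht.mono_left atTop_le_cocompact)
  have i12 : Integrable (fun x => s * sqProfile s w g x + 3 / 2 * w * sqProfile s w g x ^ 2) :=
    (i1.const_mul s).add (i2.const_mul (3 / 2 * w))
  rw [integral_sub i12 (i3.const_mul (g / 2)), integral_add (i1.const_mul s) (i2.const_mul (3 / 2 * w)), integral_const_mul,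
    integral_const_mul, integral_const_mul] at hI
  simpa using hI

end Profile

/-! ### Densities of the solitary wave -/

section Wave

variable {b ω₀ ω₁ : ℝ}

/-- The real phase of `φ_ω`. -/
def phase (s w g x : ℝ) : ℝ := w / 2 * x - 1 / 4 * ∫ η in Set.Iic x, sqProfile s w g η

lemma hasDerivAt_phase {s w g : ℝ} (hs : 0 < s) (hg : 0 < g) (x : ℝ) :
    HasDerivAt (phase s w g) (w / 2 - 1 / 4 * sqProfile s w g x) x := by
  have i1 := integrable_sqProfile (w := w) hs hg
  have hc := continuous_sqProfile (w := w) hs hg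
  have hJ : HasDerivAt (fun x => ∫ η in Set.Iic x, sqProfile s w g η) (sqProfile s w g x) x := by
    have h0 := (hc.integral_hasStrictDerivAt 0 x).hasDerivAt.const_add
      (∫ η in Set.Iic (0 : ℝ), sqProfile s w g η)
    refine h0.congr_of_eventuallyEq (Filter.Eventually.of_forall fun y => ?_)
    have := intervalIntegral.integral_Iic_sub_Iic (a := 0) (b := y)
      i1.integrableOn i1.integrableOn
    simp only
    linarith
  have hx : HasDerivAt (fun x : ℝ => w / 2 * x) (w / 2) x := by
    simpa using (hasDerivAt_id x).const_mul (w / 2)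
  exact hx.sub (hJ.const_mul (1 / 4))

lemma phi_eq (hb : 0 < b) (hΩ : ω₁ ^ 2 < 4 * ω₀) (x : ℝ) :
    phi b ω₀ ω₁ x = (Real.sqrt (sqProfile (4 * ω₀ - ω₁ ^ 2) ω₁ (gam b) x) : ℂ) *
      Complex.exp (phase (4 * ω₀ - ω₁ ^ 2) ω₁ (gam b) x * Complex.I) := by
  have hs : 0 < 4 * ω₀ - ω₁ ^ 2 := by linarith
  have hg : 0 < gam b := by unfold gam; positivity
  have hsq : ∀ η, phit b ω₀ ω₁ η ^ 2 = sqProfile (4 * ω₀ - ω₁ ^ 2) ω₁ (gam b) η := fun η =>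
    Real.sq_sqrt (sqProfile_pos hs hg η).le
  unfold phi
  simp only [hsq]
  congr 2
  simp only [phase]
  push_cast
  ring

lemma hasDerivAt_phi (hb : 0 < b) (hΩ : ω₁ ^ 2 < 4 * ω₀) (x : ℝ) :
    HasDerivAt (phi b ω₀ ω₁)
      (((sqProfileDeriv (4 * ω₀ - ω₁ ^ 2) ω₁ (gam b) x /
          (2 * Real.sqrt (sqProfile (4 * ω₀ - ω₁ ^ 2) ω₁ (gam b) x)) : ℝ) +
        ((ω₁ / 2 - 1 / 4 * sqProfile (4 * ω₀ - ω₁ ^ 2) ω₁ (gam b) x) *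
          Real.sqrt (sqProfile (4 * ω₀ - ω₁ ^ 2) ω₁ (gam b) x) : ℝ) * Complex.I) *
        Complex.exp (phase (4 * ω₀ - ω₁ ^ 2) ω₁ (gam b) x * Complex.I)) x := by
  have hs : 0 < 4 * ω₀ - ω₁ ^ 2 := by linarith
  have hg : 0 < gam b := by unfold gam; positivity
  rw [funext (phi_eq hb hΩ)]
  have h1 := ((hasDerivAt_sqProfile (w := ω₁) hs hg x).sqrt (sqProfile_pos hs hg x).ne').ofReal_comp
  have h2 := (((hasDerivAt_phase (w := ω₁) hs hg x).ofReal_comp).mul_const Complex.I).cexp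
  refine (h1.mul h2).congr_deriv ?_
  push_cast
  ring

lemma norm_phi_sq (hb : 0 < b) (hΩ : ω₁ ^ 2 < 4 * ω₀) (x : ℝ) :
    ‖phi b ω₀ ω₁ x‖ ^ 2 = sqProfile (4 * ω₀ - ω₁ ^ 2) ω₁ (gam b) x := by
  have hs : 0 < 4 * ω₀ - ω₁ ^ 2 := by linarith
  have hg : 0 < gam b := by unfold gam; positivity
  rw [phi_eq hb hΩ, norm_mul, Complex.norm_exp_ofReal_mul_I, mul_one, Complex.norm_real,
    Real.norm_eq_abs, sq_abs, Real.sq_sqrt (sqProfile_pos hs hg x).le]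

lemma norm_deriv_phi_sq (hb : 0 < b) (hΩ : ω₁ ^ 2 < 4 * ω₀) (x : ℝ) :
    ‖deriv (phi b ω₀ ω₁) x‖ ^ 2 = ω₀ * sqProfile (4 * ω₀ - ω₁ ^ 2) ω₁ (gam b) x
      - b / 3 * sqProfile (4 * ω₀ - ω₁ ^ 2) ω₁ (gam b) x ^ 3 := by
  have hs : 0 < 4 * ω₀ - ω₁ ^ 2 := by linarith
  have hg : 0 < gam b := by unfold gam; positivity
  rw [(hasDerivAt_phi hb hΩ x).deriv, norm_mul, Complex.norm_exp_ofReal_mul_I, mul_one,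
    Complex.sq_norm, Complex.normSq_add_mul_I, div_pow, mul_pow, mul_pow, Real.sq_sqrt
    (sqProfile_pos hs hg x).le, sqProfileDeriv_sq hs hg x]
  have h0 := (sqProfile_pos (w := ω₁) hs hg x).ne'
  generalize sqProfile (4 * ω₀ - ω₁ ^ 2) ω₁ (gam b) x = f at *
  unfold gam
  field_simp
  ring

lemma momentum_density (hb : 0 < b) (hΩ : ω₁ ^ 2 < 4 * ω₀) (x : ℝ) :
    Complex.I * deriv (phi b ω₀ ω₁) x * (starRingEnd ℂ) (phi b ω₀ ω₁ x) =
      ((1 / 4 * sqProfile (4 * ω₀ - ω₁ ^ 2) ω₁ (gam b) x ^ 2 -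
        ω₁ / 2 * sqProfile (4 * ω₀ - ω₁ ^ 2) ω₁ (gam b) x : ℝ) : ℂ) +
      ((1 / 2 * sqProfileDeriv (4 * ω₀ - ω₁ ^ 2) ω₁ (gam b) x : ℝ) : ℂ) * Complex.I := by
  have hs : 0 < 4 * ω₀ - ω₁ ^ 2 := by linarith
  have hg : 0 < gam b := by unfold gam; positivity
  rw [(hasDerivAt_phi hb hΩ x).deriv, phi_eq hb hΩ x, map_mul, Complex.conj_ofReal]
  have hE : Complex.exp (phase (4 * ω₀ - ω₁ ^ 2) ω₁ (gam b) x * Complex.I) *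
      (starRingEnd ℂ) (Complex.exp (phase (4 * ω₀ - ω₁ ^ 2) ω₁ (gam b) x * Complex.I)) = 1 := by
    rw [Complex.mul_conj, Complex.normSq_eq_norm_sq, Complex.norm_exp_ofReal_mul_I]
    norm_num
  have h0 := sqProfile_pos (w := ω₁) hs hg x
  have hr := (Real.sqrt_pos.2 h0).ne'
  have hr2 := Real.sq_sqrt h0.le
  generalize Complex.exp (phase (4 * ω₀ - ω₁ ^ 2) ω₁ (gam b) x * Complex.I) = e at *
  generalize sqProfileDeriv (4 * ω₀ - ω₁ ^ 2) ω₁ (gam b) x = f' at *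
  generalize hf : sqProfile (4 * ω₀ - ω₁ ^ 2) ω₁ (gam b) x = f at *
  generalize Real.sqrt f = r at *
  have hrC : (r : ℂ) ≠ 0 := by exact_mod_cast hr
  rw [← hr2]
  calc _ = Complex.I * (((f' / (2 * r) : ℝ) : ℂ) +
        (((ω₁ / 2 - 1 / 4 * r ^ 2) * r : ℝ) : ℂ) * Complex.I) * r *
        (e * (starRingEnd ℂ) e) := by ring
    _ = _ := by
      rw [hE]
      push_cast
      field_simp
      ring_nf
      simp only [Complex.I_sq]
      ring

end Wave

/-! ### The energy identity -/

theorem stmt4 (b : ℝ) (hb : 0 < b) (ω₀ ω₁ : ℝ) (hΩ : ω₁ ^ 2 < 4 * ω₀) :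
    Efun b (phi b ω₀ ω₁) = -(ω₁ / 2) * Q1 (phi b ω₀ ω₁) := by
  have hs : 0 < 4 * ω₀ - ω₁ ^ 2 := by linarith
  have hg : 0 < gam b := by unfold gam; positivity
  have i1 := integrable_sqProfile (w := ω₁) hs hg
  have i2 := integrable_sqProfile_pow (w := ω₁) hs hg 1
  have i3 := integrable_sqProfile_pow (w := ω₁) hs hg 2
  have j1 := integrable_sqProfileDeriv (w := ω₁) hs hg
  have key := integral_sqProfile_identity (w := ω₁) hs hg
  have hbd : ∃ C, 0 < C ∧ ∀ x, sqProfile (4 * ω₀ - ω₁ ^ 2) ω₁ (gam b) x ≤ C :=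
    sqProfile_bdd hs hg
  have hpos := fun x => sqProfile_pos (w := ω₁) hs hg x
  have hmom := momentum_density hb hΩ
  have hn := norm_phi_sq hb hΩ
  have hd := norm_deriv_phi_sq hb hΩ
  have hcf := continuous_sqProfile (w := ω₁) hs hg
  generalize sqProfile (4 * ω₀ - ω₁ ^ 2) ω₁ (gam b) = f at *
  generalize sqProfileDeriv (4 * ω₀ - ω₁ ^ 2) ω₁ (gam b) = f' at *
  obtain ⟨C, hC, hfC⟩ := hbd
  norm_num only at i2 i3
  have j2 : Integrable (fun x => f x * f' x) := by
    refine j1.bdd_mul hcf.aestronglyMeasurable (c := C) (Filter.Eventually.of_forall fun x => ?_)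
    rw [Real.norm_of_nonneg (hpos x).le]
    exact hfC x
  -- A complex integral has the expected real part only once the imaginary part is integrable.
  have re_int : ∀ u v : ℝ → ℝ, Integrable u → Integrable v →
      (∫ x, ((u x : ℂ) + (v x : ℂ) * Complex.I)).re = ∫ x, u x := by
    intro u v hu hv
    have h := hu.ofReal (𝕜 := ℂ) |>.add (hv.ofReal (𝕜 := ℂ) |>.mul_const Complex.I)
    have := integral_re h
    simp at this
    exact this.symm
  have hQ : Q1 (phi b ω₀ ω₁) = 1 / 2 * (1 / 4 * (∫ x, f x ^ 2) - ω₁ / 2 * ∫ x, f x) := by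
    unfold Q1
    simp only [hmom]
    rw [re_int (fun x => 1 / 4 * f x ^ 2 - ω₁ / 2 * f x) _ ((i2.const_mul _).sub (i1.const_mul _)) (j1.const_mul _),
      integral_sub (i2.const_mul _) (i1.const_mul _), integral_const_mul, integral_const_mul]
  have hP : Pfun (phi b ω₀ ω₁) = 1 / 4 * (∫ x, f x ^ 3) - ω₁ / 2 * ∫ x, f x ^ 2 := by
    have e : ∀ x, Complex.I * (‖phi b ω₀ ω₁ x‖ : ℂ) ^ 2 * deriv (phi b ω₀ ω₁) x *
        (starRingEnd ℂ) (phi b ω₀ ω₁ x) =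
        ((1 / 4 * f x ^ 3 - ω₁ / 2 * f x ^ 2 : ℝ) : ℂ) +
          ((1 / 2 * (f x * f' x) : ℝ) : ℂ) * Complex.I := by
      intro x
      have h1 : ((‖phi b ω₀ ω₁ x‖ : ℂ)) ^ 2 = (f x : ℂ) := by rw [← hn x]; push_cast; rfl
      rw [h1]
      calc _ = (f x : ℂ) * (Complex.I * deriv (phi b ω₀ ω₁) x *
            (starRingEnd ℂ) (phi b ω₀ ω₁ x)) := by ring
        _ = _ := by rw [hmom x]; push_cast; ring
    unfold Pfun
    simp only [e]
    rw [re_int (fun x => 1 / 4 * f x ^ 3 - ω₁ / 2 * f x ^ 2) _ ((i3.const_mul _).sub (i2.const_mul _)) (j2.const_mul _),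
      integral_sub (i3.const_mul _) (i2.const_mul _), integral_const_mul, integral_const_mul]
  have h6 : ∀ x, ‖phi b ω₀ ω₁ x‖ ^ 6 = f x ^ 3 := fun x => by rw [← hn x]; ring
  unfold Efun
  simp only [hd, h6]
  rw [hQ, hP, integral_sub (i1.const_mul _) (i3.const_mul _), integral_const_mul,
    integral_const_mul]
  unfold gam at key
  linear_combination (1 / 8 : ℝ) * key

end
end

section
/- Let b > 0 and γ = 1 + 16b/3. Then there exists a unique ξ̂ ∈ (0, ∞) such that g(ξ̂) = 1, where g(ξ) = (2(γ−1)/ξ)·arctan((1 + √(1 + ξ²))/ξ). -/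
/-!
On `(0, ∞)` the function `gfun b` is the product of the strictly decreasing positive factor `c / ξ`,
`c = 2 (γ - 1) > 0`, and the nonincreasing positive factor `arctan ((1 + √(1 + ξ²)) / ξ)`, so it is
strictly decreasing and takes the value `1` at most once. The argument of the arctangent exceeds `1`,
so the second factor lies in `(π / 4, π / 2)`; hence `gfun b ≥ 1` at `ξ = c π / 4` and `gfun b ≤ 1`
at `ξ = c π / 2`, and the intermediate value theorem gives existence.
-/

open MeasureTheory

noncomputable section

lemma one_lt_arg {x : ℝ} (hx : 0 < x) : 1 < (1 + Real.sqrt (1 + x ^ 2)) / x := by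
  rw [lt_div_iff₀ hx]
  have : x ≤ Real.sqrt (1 + x ^ 2) := Real.le_sqrt_of_sq_le (by linarith)
  linarith

lemma pi_div_four_lt_arctan_arg {x : ℝ} (hx : 0 < x) :
    Real.pi / 4 < Real.arctan ((1 + Real.sqrt (1 + x ^ 2)) / x) := by
  rw [← Real.arctan_one]
  exact Real.arctan_strictMono (one_lt_arg hx)

lemma arg_antitoneOn :
    AntitoneOn (fun x : ℝ => (1 + Real.sqrt (1 + x ^ 2)) / x) (Set.Ioi 0) := by
  intro x hx y hy hxy
  have hx : 0 < x := hx
  have hy : 0 < y := hy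
  have key : x * Real.sqrt (1 + y ^ 2) ≤ y * Real.sqrt (1 + x ^ 2) := by
    refine (sq_le_sq₀ (by positivity) (by positivity)).1 ?_
    rw [mul_pow, mul_pow, Real.sq_sqrt (by positivity), Real.sq_sqrt (by positivity)]
    nlinarith
  change (1 + Real.sqrt (1 + y ^ 2)) / y ≤ (1 + Real.sqrt (1 + x ^ 2)) / x
  rw [div_le_div_iff₀ hy hx]
  linarith

lemma gam_sub_one_pos {b : ℝ} (hb : 0 < b) : 0 < 2 * (gam b - 1) := by
  unfold gam
  linarith

lemma gfun_strictAntiOn {b : ℝ} (hb : 0 < b) : StrictAntiOn (gfun b) (Set.Ioi 0) := by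
  intro x hx y hy hxy
  have hc := gam_sub_one_pos hb
  have hx' : 0 < x := hx
  have hpos := pi_div_four_lt_arctan_arg hx'
  have hpi := Real.pi_pos
  unfold gfun
  refine mul_lt_mul (div_lt_div_of_pos_left hc hx' hxy)
    (Real.arctan_strictMono.monotone (arg_antitoneOn hx hy hxy.le)) ?_ (by positivity)
  linarith [pi_div_four_lt_arctan_arg (show 0 < y from hy)]

lemma gfun_continuousOn (b : ℝ) : ContinuousOn (gfun b) (Set.Ioi 0) := by
  unfold gfun
  have h0 : ∀ x ∈ Set.Ioi (0 : ℝ), x ≠ 0 := fun x hx => ne_of_gt hx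
  refine (continuousOn_const.div continuousOn_id h0).mul
    (Real.continuous_arctan.comp_continuousOn (ContinuousOn.div ?_ continuousOn_id h0))
  fun_prop

theorem stmt6 (b : ℝ) (hb : 0 < b) :
    ∃! ξ : ℝ, ξ ∈ Set.Ioi (0 : ℝ) ∧ gfun b ξ = 1 := by
  have hc := gam_sub_one_pos hb
  have hpi := Real.pi_pos
  set c := 2 * (gam b - 1) with hcdef
  have h1 : 0 < c * Real.pi / 4 := by positivity
  have h2 : 0 < c * Real.pi / 2 := by positivity
  have hle : c * Real.pi / 4 ≤ c * Real.pi / 2 := by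
    linarith [mul_pos hc hpi]
  have hg1 : 1 ≤ gfun b (c * Real.pi / 4) := by
    unfold gfun
    rw [← hcdef, div_mul_eq_mul_div, le_div_iff₀ h1]
    linarith [mul_lt_mul_of_pos_left (pi_div_four_lt_arctan_arg h1) hc]
  have hg2 : gfun b (c * Real.pi / 2) ≤ 1 := by
    unfold gfun
    rw [← hcdef, div_mul_eq_mul_div, div_le_iff₀ h2]
    linarith [mul_lt_mul_of_pos_left (Real.arctan_lt_pi_div_two
      ((1 + Real.sqrt (1 + (c * Real.pi / 2) ^ 2)) / (c * Real.pi / 2))) hc]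
  have hsub : Set.Icc (c * Real.pi / 4) (c * Real.pi / 2) ⊆ Set.Ioi 0 :=
    fun x hx => lt_of_lt_of_le h1 hx.1
  obtain ⟨ξ, hξ, hgξ⟩ :=
    intermediate_value_Icc' hle ((gfun_continuousOn b).mono hsub) ⟨hg2, hg1⟩
  refine ⟨ξ, ⟨hsub hξ, hgξ⟩, ?_⟩
  rintro y ⟨hy, hgy⟩
  exact (gfun_strictAntiOn hb).injOn hy (hsub hξ) (hgy.trans hgξ.symm)

end
end

section
/- Let b > 0 and γ = 1 + 16b/3. Let ξ̂ be the unique element of (0, ∞) with g(ξ̂) = 1, and set κ = (1 + ξ̂²/γ)^{−1/2}. Then κ ∈ (0, 1), and for every ω = (ω₀, ω₁) ∈ Ω one has: Q₁(φ_ω) > 0 if and only if ω₁ < 2κ√ω₀, and Q₁(φ_ω) < 0 if and only if ω₁ > 2κ√ω₀. -/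
/-!
Write `n = √(4ω₀ − ω₁²)`, `D = √(ω₁² + γ n²)` and `ρ = ˜φ_ω² = 2n² / (D cosh(n x) − ω₁)`. In polar
form the momentum density has real part `-ρ θ'` with `θ' = ω₁/2 − ρ/4`, so
`2 Q₁(φ_ω) = ∫ (ρ²/4 − ω₁ρ/2)`.

Both moments of `ρ` are explicit. An arctangent antiderivative gives
`∫ ρ = (4/√γ) (π/2 + arctan y)` with `y = ω₁ / (√γ n)` (`integral_rho`), and
`γρ²/4 − ω₁ρ/2` is the derivative of `n D sinh(n x) / (D cosh(n x) − ω₁)`, so its integral is `2n`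
(`integral_rho_sq`). Hence `Q₁(φ_ω) = (n/γ) (1 − (γ−1) y (π/2 + arctan y))` (`Q1_phi`).

The double-angle formula for arctan gives `g(ξ) = (γ−1) ξ⁻¹ (π/2 + arctan ξ⁻¹)` (`gfun_eq`). Since
`y ↦ y (π/2 + arctan y)` is increasing for `y > 0` and nonpositive for `y ≤ 0`, the sign of `Q₁` is
that of `1/ξ̂ − y`, which by squaring is that of `2κ√ω₀ − ω₁`.
-/


open MeasureTheory

noncomputable section

/-- Denominator of the squared profile `ρ = ˜φ_ω²`, in terms of `w = ω₁`, `n = √(4ω₀ − ω₁²)` and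
`D = √(ω₁² + γ n²)`. -/
def den (w n D x : ℝ) : ℝ := D * Real.cosh (n * x) - w

/-- The squared profile `ρ = ˜φ_ω²`. -/
def rho (w n D x : ℝ) : ℝ := 2 * n ^ 2 / den w n D x

/-- The derivative of `rho`. -/
def rhoDeriv (w n D x : ℝ) : ℝ :=
  -(2 * n ^ 2 * (D * n * Real.sinh (n * x))) / den w n D x ^ 2

/-- An antiderivative of `rho`, obtained from the substitution `u = exp (n x)`; here `q = √γ`. -/
def rhoPrim (w n D q x : ℝ) : ℝ :=
  4 / q * Real.arctan ((D * Real.exp (n * x) - w) / (q * n))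

lemma den_pos {w n D : ℝ} (hD : |w| < D) (x : ℝ) : 0 < den w n D x := by
  have h1 := Real.one_le_cosh (n * x)
  have h2 := le_abs_self w
  have h3 := abs_nonneg w
  unfold den; nlinarith

lemma hasDerivAt_den (w n D x : ℝ) :
    HasDerivAt (den w n D) (D * n * Real.sinh (n * x)) x := by
  have h1 : HasDerivAt (fun x : ℝ => n * x) n x := by simpa using (hasDerivAt_id x).const_mul n
  have h : HasDerivAt (den w n D) _ x := ((h1.cosh).const_mul D).sub_const w
  exact h.congr_deriv (by ring)

lemma continuous_den (w n D : ℝ) : Continuous (den w n D) := by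
  unfold den; fun_prop

lemma rho_pos {w n D : ℝ} (hn : 0 < n) (hD : |w| < D) (x : ℝ) : 0 < rho w n D x :=
  div_pos (by positivity) (den_pos hD x)

lemma continuous_rho {w n D : ℝ} (hD : |w| < D) : Continuous (rho w n D) :=
  continuous_const.div (continuous_den w n D) fun x => (den_pos hD x).ne'

lemma hasDerivAt_rho {w n D : ℝ} (hD : |w| < D) (x : ℝ) :
    HasDerivAt (rho w n D) (rhoDeriv w n D x) x := by
  have h : HasDerivAt (rho w n D) _ x :=
    (hasDerivAt_const x (2 * n ^ 2)).div (hasDerivAt_den w n D x) (den_pos hD x).ne'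
  exact h.congr_deriv (by simp [rhoDeriv])

lemma rho_neg (w n D x : ℝ) : rho w n D (-x) = rho w n D x := by
  simp [rho, den]

lemma hasDerivAt_rhoPrim {w n D q : ℝ} (hn : 0 < n) (hq : 0 < q) (hD : |w| < D)
    (hDsq : D ^ 2 = w ^ 2 + q ^ 2 * n ^ 2) (x : ℝ) :
    HasDerivAt (rhoPrim w n D q) (rho w n D x) x := by
  have h1 : HasDerivAt (fun x : ℝ => n * x) n x := by simpa using (hasDerivAt_id x).const_mul n
  have h : HasDerivAt (rhoPrim w n D q) _ x :=
    (((((h1.exp).const_mul D).sub_const w).div_const (q * n)).arctan).const_mul (4 / q)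
  refine h.congr_deriv ?_
  have hd := den_pos (n := n) hD x
  have hu := Real.exp_pos (n * x)
  unfold rho
  rw [den, Real.cosh_eq, Real.exp_neg] at *
  set u := Real.exp (n * x)
  -- The key identity `q²n² + (Du − w)² = 2 D u (D cosh − w)`, in terms of `u = exp (n x)`.
  have key : (q * n) ^ 2 + (D * u - w) ^ 2 = 2 * u * D * (D * ((u + u⁻¹) / 2) - w) := by
    field_simp
    linear_combination -hDsq
  have hDpos : 0 < D := (abs_nonneg w).trans_lt hD
  have e : 1 + ((D * u - w) / (q * n)) ^ 2
      = 2 * u * D * (D * ((u + u⁻¹) / 2) - w) / (q * n) ^ 2 := by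
    rw [← key]; field_simp
  rw [e]
  generalize D * ((u + u⁻¹) / 2) - w = d at *
  field_simp
  ring

lemma tendsto_rhoPrim_atTop {w n D q : ℝ} (hn : 0 < n) (hq : 0 < q) (hD : |w| < D) :
    Filter.Tendsto (rhoPrim w n D q) Filter.atTop (nhds (4 / q * (Real.pi / 2))) := by
  have hDpos : 0 < D := (abs_nonneg w).trans_lt hD
  refine Filter.Tendsto.const_mul _ ?_
  refine (Real.tendsto_arctan_atTop.mono_right nhdsWithin_le_nhds).comp ?_
  refine Filter.Tendsto.atTop_div_const (by positivity) ?_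
  refine Filter.tendsto_atTop_add_const_right _ (-w) ?_
  exact (Real.tendsto_exp_atTop.comp (Filter.tendsto_id.const_mul_atTop hn)).const_mul_atTop hDpos

lemma tendsto_rhoPrim_atBot {w n D q : ℝ} (hn : 0 < n) :
    Filter.Tendsto (rhoPrim w n D q) Filter.atBot
      (nhds (-(4 / q * Real.arctan (w / (q * n))))) := by
  have h0 : Filter.Tendsto (fun x : ℝ => Real.exp (n * x)) Filter.atBot (nhds 0) :=
    Real.tendsto_exp_atBot.comp (Filter.tendsto_id.const_mul_atBot hn)
  have h1 := ((h0.const_mul D).sub_const w).div_const (q * n)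
  have h2 : Filter.Tendsto (rhoPrim w n D q) Filter.atBot _ :=
    ((Real.continuous_arctan.tendsto _).comp h1).const_mul (4 / q)
  rwa [mul_zero, zero_sub, neg_div, Real.arctan_neg, mul_neg] at h2

lemma integrable_rho {w n D q : ℝ} (hn : 0 < n) (hq : 0 < q) (hD : |w| < D)
    (hDsq : D ^ 2 = w ^ 2 + q ^ 2 * n ^ 2) : Integrable (rho w n D) := by
  have h1 : IntegrableOn (rho w n D) (Set.Ioi 0) :=
    integrableOn_Ioi_deriv_of_nonneg' (fun x _ => hasDerivAt_rhoPrim hn hq hD hDsq x)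
      (fun x _ => (rho_pos hn hD x).le) (tendsto_rhoPrim_atTop hn hq hD)
  have h2 : IntegrableOn (rho w n D) (Set.Iio 0) := by
    have h1' : IntegrableOn (rho w n D) (Set.Ioi (-0)) := by simpa using h1
    have h := h1'.comp_neg_Iio
    simpa only [rho_neg] using h
  rw [← integrableOn_univ, ← Set.Iic_union_Ioi (a := (0 : ℝ))]
  exact (Iff.mpr integrableOn_Iic_iff_integrableOn_Iio h2).union h1

lemma cosh_le_den (w n D x : ℝ) :
    (D - |w|) * Real.cosh (n * x) ≤ den w n D x := by
  have h1 := Real.one_le_cosh (n * x)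
  have h2 := le_abs_self w
  have h3 := abs_nonneg w
  unfold den; nlinarith

lemma integrable_rho_sq {w n D q : ℝ} (hn : 0 < n) (hq : 0 < q) (hD : |w| < D)
    (hDsq : D ^ 2 = w ^ 2 + q ^ 2 * n ^ 2) : Integrable (fun x => rho w n D x ^ 2) := by
  have h := (integrable_rho hn hq hD hDsq).bdd_mul (c := 2 * n ^ 2 / (D - |w|))
    (continuous_rho (n := n) hD).aestronglyMeasurable (Filter.Eventually.of_forall fun x => by
      rw [Real.norm_of_nonneg (rho_pos hn hD x).le]
      have h1 := Real.one_le_cosh (n * x)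
      have h2 : 0 < D - |w| := by linarith
      refine div_le_div_of_nonneg_left (by positivity) h2 ?_
      nlinarith [cosh_le_den w n D x])
  simpa only [sq] using h

lemma integrable_rhoDeriv {w n D q : ℝ} (hn : 0 < n) (hq : 0 < q) (hD : |w| < D)
    (hDsq : D ^ 2 = w ^ 2 + q ^ 2 * n ^ 2) : Integrable (rhoDeriv w n D) := by
  have hcont : Continuous fun x => -(D * n * Real.sinh (n * x)) / den w n D x := by
    refine Continuous.div (by fun_prop) (continuous_den w n D) fun x => (den_pos hD x).ne'
  have hDpos : 0 < D := (abs_nonneg w).trans_lt hD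
  have h := (integrable_rho hn hq hD hDsq).bdd_mul (c := D * n / (D - |w|))
    hcont.aestronglyMeasurable (Filter.Eventually.of_forall fun x => by
      have h2 : 0 < D - |w| := by linarith
      have hd := den_pos (n := n) hD x
      have hs : |Real.sinh (n * x)| ≤ Real.cosh (n * x) := by
        rw [Real.abs_sinh]
        exact (Real.sinh_lt_cosh _).le.trans (Real.cosh_abs _).le
      rw [Real.norm_eq_abs, abs_div, abs_neg, abs_mul, abs_of_pos hd, abs_of_pos (mul_pos hDpos hn),
        div_le_div_iff₀ hd h2]
      have h3 := (mul_le_mul_of_nonneg_left hs h2.le).trans (cosh_le_den w n D x)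
      nlinarith [mul_le_mul_of_nonneg_left h3 (mul_pos hDpos hn).le])
  refine h.congr (Filter.Eventually.of_forall fun x => ?_)
  have hd := (den_pos (n := n) hD x).ne'
  simp only [rhoDeriv, rho]
  field_simp

lemma integral_rho {w n D q : ℝ} (hn : 0 < n) (hq : 0 < q) (hD : |w| < D)
    (hDsq : D ^ 2 = w ^ 2 + q ^ 2 * n ^ 2) :
    ∫ x, rho w n D x = 4 / q * (Real.pi / 2 + Real.arctan (w / (q * n))) := by
  rw [integral_of_hasDerivAt_of_tendsto (hasDerivAt_rhoPrim hn hq hD hDsq)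
    (integrable_rho hn hq hD hDsq) (tendsto_rhoPrim_atBot hn) (tendsto_rhoPrim_atTop hn hq hD)]
  ring

lemma tendsto_den_atTop {w n D : ℝ} (hn : 0 < n) (hD : |w| < D) :
    Filter.Tendsto (den w n D) Filter.atTop Filter.atTop := by
  have hDpos : 0 < D := (abs_nonneg w).trans_lt hD
  have h1 : Filter.Tendsto (fun x : ℝ => D / 2 * Real.exp (n * x) + -w)
      Filter.atTop Filter.atTop :=
    Filter.tendsto_atTop_add_const_right _ (-w)
      ((Real.tendsto_exp_atTop.comp
        (Filter.tendsto_id.const_mul_atTop hn)).const_mul_atTop (by positivity))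
  refine Filter.tendsto_atTop_mono (fun x => ?_) h1
  rw [den, Real.cosh_eq]
  nlinarith [Real.exp_pos (-(n * x))]

lemma tendsto_sinh_div_den_atTop {w n D : ℝ} (hn : 0 < n) (hD : |w| < D) :
    Filter.Tendsto (fun x => D * Real.sinh (n * x) / den w n D x) Filter.atTop (nhds 1) := by
  have h0 : Filter.Tendsto (fun x : ℝ => Real.exp (-(n * x))) Filter.atTop (nhds 0) :=
    Real.tendsto_exp_neg_atTop_nhds_zero.comp (Filter.tendsto_id.const_mul_atTop hn)
  have h1 := ((h0.const_mul D).const_sub w).div_atTop (tendsto_den_atTop hn hD)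
  have h2 := h1.const_add 1
  rw [add_zero] at h2
  refine h2.congr fun x => ?_
  have hd := (den_pos (n := n) hD x).ne'
  rw [eq_div_iff hd, add_mul, div_mul_cancel₀ _ hd, den, ← Real.cosh_sub_sinh]
  ring

/-- The second moment of the profile is determined by the first, because
`γ ρ² / 4 − w ρ / 2` is the derivative of `n D sinh(n x) / (D cosh(n x) − w)`. -/
lemma integral_rho_sq {w n D q : ℝ} (hn : 0 < n) (hq : 0 < q) (hD : |w| < D)
    (hDsq : D ^ 2 = w ^ 2 + q ^ 2 * n ^ 2) :
    q ^ 2 / 4 * (∫ x, rho w n D x ^ 2) - w / 2 * (∫ x, rho w n D x) = 2 * n := by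
  have hi1 := (integrable_rho hn hq hD hDsq).const_mul (w / 2)
  have hi2 := (integrable_rho_sq hn hq hD hDsq).const_mul (q ^ 2 / 4)
  rw [← integral_const_mul, ← integral_const_mul, ← integral_sub hi2 hi1]
  have hder : ∀ x, HasDerivAt (fun x => n * (D * Real.sinh (n * x) / den w n D x))
      (q ^ 2 / 4 * rho w n D x ^ 2 - w / 2 * rho w n D x) x := by
    intro x
    have hd := (den_pos (n := n) hD x).ne'
    have h1 : HasDerivAt (fun x : ℝ => n * x) n x := by simpa using (hasDerivAt_id x).const_mul n
    have h : HasDerivAt (fun x => n * (D * Real.sinh (n * x) / den w n D x)) _ x :=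
      (((h1.sinh).const_mul D).div (hasDerivAt_den w n D x) hd).const_mul n
    refine h.congr_deriv ?_
    rw [rho]
    field_simp
    have hc := Real.cosh_sq (n * x)
    unfold den
    linear_combination 4 * hDsq + 4 * D ^ 2 * hc
  have htop := (tendsto_sinh_div_den_atTop (w := w) hn hD).const_mul n
  have hbot : Filter.Tendsto (fun x => n * (D * Real.sinh (n * x) / den w n D x)) Filter.atBot
      (nhds (-(n * 1))) := by
    refine ((htop.comp Filter.tendsto_neg_atBot_atTop).neg).congr fun x => ?_
    simp [den, neg_div]
  rw [integral_of_hasDerivAt_of_tendsto hder (hi2.sub hi1) hbot htop]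
  ring

/-- The momentum density of a function in polar form `r exp(iθ)`. When `r² = ρ`, the imaginary part
is half the derivative of `ρ`. -/
lemma density_eq {r θ : ℝ → ℝ} {r' θ' x : ℝ} (hr : HasDerivAt r r' x) (hθ : HasDerivAt θ θ' x) :
    Complex.I * deriv (fun x => (r x : ℂ) * Complex.exp (Complex.I * (θ x : ℂ))) x *
      (starRingEnd ℂ) ((r x : ℂ) * Complex.exp (Complex.I * (θ x : ℂ)))
      = ((-(r x ^ 2 * θ') : ℝ) : ℂ) + ((r x * r' : ℝ) : ℂ) * Complex.I := by
  have h : HasDerivAt (fun x => (r x : ℂ) * Complex.exp (Complex.I * (θ x : ℂ))) _ x :=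
    hr.ofReal_comp.mul ((hθ.ofReal_comp.const_mul Complex.I).cexp)
  rw [HasDerivAt.deriv h]
  have hE : Complex.exp (Complex.I * (θ x : ℂ)) *
      (starRingEnd ℂ) (Complex.exp (Complex.I * (θ x : ℂ))) = 1 := by
    rw [← Complex.exp_conj, ← Complex.exp_add]
    simp
  rw [map_mul, Complex.conj_ofReal]
  push_cast
  generalize (starRingEnd ℂ) (Complex.exp (Complex.I * (θ x : ℂ))) = E' at *
  generalize Complex.exp (Complex.I * (θ x : ℂ)) = E at *
  linear_combination (Complex.I * r' * r x + Complex.I ^ 2 * r x ^ 2 * θ') * hE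
    + (r x : ℂ) ^ 2 * θ' * Complex.I_sq

/-- Closed form of the momentum: with `y = ω₁ / (√γ n)`,
`Q₁(φ_ω) = (n / γ) (1 − (γ − 1) y (π/2 + arctan y))`. -/
lemma Q1_phi {b ω₀ ω₁ n q : ℝ} (hn : 0 < n) (hq : 0 < q) (hnsq : n ^ 2 = 4 * ω₀ - ω₁ ^ 2)
    (hqsq : q ^ 2 = gam b) :
    Q1 (phi b ω₀ ω₁) = n / q ^ 2 *
      (1 - (q ^ 2 - 1) * (ω₁ / (q * n) * (Real.pi / 2 + Real.arctan (ω₁ / (q * n))))) := by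
  obtain ⟨D, hDdef⟩ : ∃ D, D = Real.sqrt (ω₁ ^ 2 + gam b * (4 * ω₀ - ω₁ ^ 2)) := ⟨_, rfl⟩
  have hpos : 0 < q ^ 2 * n ^ 2 := by positivity
  have hDsq : D ^ 2 = ω₁ ^ 2 + q ^ 2 * n ^ 2 := by
    rw [hDdef, ← hnsq, ← hqsq, Real.sq_sqrt (by positivity)]
  have hD : |ω₁| < D := by
    rw [← Real.sqrt_sq_eq_abs, hDdef, ← hnsq, ← hqsq]
    exact Real.sqrt_lt_sqrt (sq_nonneg _) (by linarith)
  have hphit : phit b ω₀ ω₁ = fun x => Real.sqrt (rho ω₁ n D x) := by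
    funext x
    rw [phit, ← hDdef, ← hnsq, Real.sqrt_sq hn.le, rho, den]
    congr 2; ring
  have hsq : ∀ x, phit b ω₀ ω₁ x ^ 2 = rho ω₁ n D x := fun x => by
    rw [hphit]; exact Real.sq_sqrt (rho_pos hn hD x).le
  obtain ⟨L, hL⟩ : ∃ L, L = -(4 / q * Real.arctan (ω₁ / (q * n))) := ⟨_, rfl⟩
  have hIic : ∀ x, ∫ η in Set.Iic x, phit b ω₀ ω₁ η ^ 2 = rhoPrim ω₁ n D q x - L := by
    intro x
    simp only [hsq]
    rw [hL]
    exact integral_Iic_of_hasDerivAt_of_tendsto'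
      (fun y _ => hasDerivAt_rhoPrim hn hq hD hDsq y)
      (integrable_rho hn hq hD hDsq).integrableOn (tendsto_rhoPrim_atBot hn)
  have hphi : phi b ω₀ ω₁ = fun x => ((Real.sqrt (rho ω₁ n D x) : ℝ) : ℂ) *
      Complex.exp (Complex.I * ((ω₁ / 2 * x - 1 / 4 * (rhoPrim ω₁ n D q x - L) : ℝ) : ℂ)) := by
    funext x
    rw [phi, hIic, hphit]
    congr 2
    push_cast; ring
  have hdens : ∀ x, Complex.I * deriv (phi b ω₀ ω₁) x * (starRingEnd ℂ) (phi b ω₀ ω₁ x)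
      = ((-(ω₁ / 2 * rho ω₁ n D x) + 1 / 4 * rho ω₁ n D x ^ 2 : ℝ) : ℂ)
        + ((1 / 2 * rhoDeriv ω₁ n D x : ℝ) : ℂ) * Complex.I := by
    intro x
    have hρ := rho_pos hn hD x
    have hr := (hasDerivAt_rho (n := n) hD x).sqrt hρ.ne'
    have hθ : HasDerivAt (fun x => ω₁ / 2 * x - 1 / 4 * (rhoPrim ω₁ n D q x - L))
        (ω₁ / 2 - 1 / 4 * rho ω₁ n D x) x := by
      have h1 : HasDerivAt (fun x : ℝ => ω₁ / 2 * x) (ω₁ / 2) x := by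
        simpa using (hasDerivAt_id x).const_mul (ω₁ / 2)
      exact h1.sub (((hasDerivAt_rhoPrim hn hq hD hDsq x).sub_const L).const_mul _)
    rw [hphi]
    refine (density_eq hr hθ).trans ?_
    have hs : 0 < Real.sqrt (rho ω₁ n D x) := Real.sqrt_pos.mpr hρ
    congr 2
    · rw [Real.sq_sqrt hρ.le]; ring
    · congr 1; field_simp
  have hi1 := ((integrable_rho hn hq hD hDsq).const_mul (ω₁ / 2)).neg
  have hi2 := (integrable_rho_sq hn hq hD hDsq).const_mul (1 / 4)
  have hi3 := (integrable_rhoDeriv hn hq hD hDsq).const_mul (1 / 2)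
  have hM1 := integral_rho hn hq hD hDsq
  have hM2 := integral_rho_sq hn hq hD hDsq
  have hint : (∫ x, Complex.I * deriv (phi b ω₀ ω₁) x * (starRingEnd ℂ) (phi b ω₀ ω₁ x)).re
      = -(ω₁ / 2 * ∫ x, rho ω₁ n D x) + 1 / 4 * ∫ x, rho ω₁ n D x ^ 2 := by
    simp only [hdens]
    have hA : Integrable fun x => -(ω₁ / 2 * rho ω₁ n D x) + 1 / 4 * rho ω₁ n D x ^ 2 :=
      hi1.add hi2
    rw [integral_add hA.ofReal (hi3.ofReal.mul_const _), integral_mul_const,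
      integral_complex_ofReal, integral_complex_ofReal]
    simp only [Complex.add_re, Complex.ofReal_re, Complex.re_ofReal_mul, Complex.I_re, mul_zero,
      add_zero]
    rw [← integral_const_mul, ← integral_const_mul, ← integral_neg]
    exact integral_add hi1 hi2
  rw [Q1, hint]
  generalize (∫ x, rho ω₁ n D x ^ 2) = M2 at *
  have e : M2 = (2 * n + ω₁ / 2 * ∫ x, rho ω₁ n D x) * 4 / q ^ 2 := by
    field_simp
    linarith
  rw [e, hM1]
  field_simp
  ring

lemma gfun_eq {b ξ : ℝ} (hξ : 0 < ξ) :
    gfun b ξ = (gam b - 1) * (ξ⁻¹ * (Real.pi / 2 + Real.arctan ξ⁻¹)) := by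
  have hs : Real.sqrt (1 + ξ ^ 2) ^ 2 = 1 + ξ ^ 2 := Real.sq_sqrt (by positivity)
  have hsξ : ξ < Real.sqrt (1 + ξ ^ 2) := Real.lt_sqrt_of_sq_lt (by linarith)
  have h1 : 1 < (1 + Real.sqrt (1 + ξ ^ 2)) / ξ := by
    rw [lt_div_iff₀ hξ]; linarith
  have h2 := Real.two_mul_arctan_add_pi h1
  have h3 : 2 * ((1 + Real.sqrt (1 + ξ ^ 2)) / ξ) / (1 - ((1 + Real.sqrt (1 + ξ ^ 2)) / ξ) ^ 2)
      = -ξ := by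
    have h4 : 1 - ((1 + Real.sqrt (1 + ξ ^ 2)) / ξ) ^ 2 ≠ 0 := by nlinarith
    rw [div_eq_iff h4]
    field_simp
    linear_combination -hs
  rw [h3, Real.arctan_neg] at h2
  rw [gfun, Real.arctan_inv_of_pos hξ]
  linear_combination (gam b - 1) / ξ * h2

/-- `y ↦ y (π/2 + arctan y)` separates a positive point from everything below it. -/
lemma mul_arctan_lt {x y : ℝ} (hy : 0 < y) (h : x < y) :
    x * (Real.pi / 2 + Real.arctan x) < y * (Real.pi / 2 + Real.arctan y) := by
  have hx' := Real.neg_pi_div_two_lt_arctan x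
  have hy' := Real.neg_pi_div_two_lt_arctan y
  have hxy := Real.arctan_strictMono h
  calc x * (Real.pi / 2 + Real.arctan x) < y * (Real.pi / 2 + Real.arctan x) := by
        apply mul_lt_mul_of_pos_right h; linarith
    _ < _ := by apply mul_lt_mul_of_pos_left _ hy; linarith

theorem stmt8 (b : ℝ) (hb : 0 < b) (ξh : ℝ) (hξ : ξh ∈ Set.Ioi (0 : ℝ)) (hg : gfun b ξh = 1)
    (κ : ℝ) (hκ : κ = (1 + ξh ^ 2 / gam b) ^ (-(1 : ℝ) / 2)) :
    (0 < κ ∧ κ < 1) ∧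
    ∀ ω₀ ω₁ : ℝ, ω₁ ^ 2 < 4 * ω₀ →
      ((0 < Q1 (phi b ω₀ ω₁) ↔ ω₁ < 2 * κ * Real.sqrt ω₀) ∧
       (Q1 (phi b ω₀ ω₁) < 0 ↔ ω₁ > 2 * κ * Real.sqrt ω₀)) := by
  have hξ0 : 0 < ξh := hξ
  have hγ : 1 < gam b := by unfold gam; linarith
  have hγ0 : 0 < gam b := by linarith
  have hA1 : 1 < 1 + ξh ^ 2 / gam b := by
    have : 0 < ξh ^ 2 / gam b := by positivity
    linarith
  have hκ0 : 0 < κ := by rw [hκ]; exact Real.rpow_pos_of_pos (by linarith) _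
  have hκsq : κ ^ 2 * (1 + ξh ^ 2 / gam b) = 1 := by
    have hA0 : 0 < 1 + ξh ^ 2 / gam b := by linarith
    rw [hκ, ← Real.rpow_natCast, ← Real.rpow_mul hA0.le]
    norm_num
    rw [Real.rpow_neg_one]
    exact inv_mul_cancel₀ hA0.ne'
  have hκ1 : κ < 1 := by rw [hκ]; exact Real.rpow_lt_one_of_one_lt_of_neg hA1 (by norm_num)
  refine ⟨⟨hκ0, hκ1⟩, fun ω₀ ω₁ hω => ?_⟩
  obtain ⟨n, hn⟩ : ∃ n, n = Real.sqrt (4 * ω₀ - ω₁ ^ 2) := ⟨_, rfl⟩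
  obtain ⟨q, hq⟩ : ∃ q, q = Real.sqrt (gam b) := ⟨_, rfl⟩
  have hn0 : 0 < n := by rw [hn]; exact Real.sqrt_pos.mpr (by linarith)
  have hq0 : 0 < q := by rw [hq]; exact Real.sqrt_pos.mpr hγ0
  have hnsq : n ^ 2 = 4 * ω₀ - ω₁ ^ 2 := by rw [hn]; exact Real.sq_sqrt (by linarith)
  have hqsq : q ^ 2 = gam b := by rw [hq]; exact Real.sq_sqrt hγ0.le
  have hω0 : 0 < ω₀ := by nlinarith [sq_nonneg ω₁]
  have hwsq : Real.sqrt ω₀ ^ 2 = ω₀ := Real.sq_sqrt hω0.le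
  have hw0 : 0 < Real.sqrt ω₀ := Real.sqrt_pos.mpr hω0
  rw [gfun_eq hξ0, ← hqsq] at hg
  rw [Q1_phi hn0 hq0 hnsq hqsq]
  rw [← hqsq] at hκsq hγ
  generalize Real.sqrt ω₀ = s at *
  have hκξ : κ ^ 2 * (q ^ 2 + ξh ^ 2) = q ^ 2 := by
    field_simp at hκsq
    linarith
  have hfac : ω₁ ^ 2 * ξh ^ 2 - (q * n) ^ 2
      = (q ^ 2 + ξh ^ 2) * (ω₁ ^ 2 - (2 * κ * s) ^ 2) := by
    linear_combination (-q ^ 2) * hnsq + 4 * s ^ 2 * hκξ + 4 * q ^ 2 * hwsq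
  have hks : 0 < 2 * κ * s := by positivity
  have hqn : 0 < q * n := by positivity
  have hS : 0 < q ^ 2 + ξh ^ 2 := by positivity
  have hY : 0 < ξh⁻¹ := inv_pos.mpr hξ0
  -- The threshold for `ω₁` is the threshold `1 / ξh` for `y = ω₁ / (q n)`.
  have hlt : ω₁ < 2 * κ * s → ω₁ / (q * n) < ξh⁻¹ := fun h => by
    rw [div_lt_iff₀ hqn, ← div_eq_inv_mul, lt_div_iff₀ hξ0]
    rcases le_or_gt ω₁ 0 with h0 | h0
    · nlinarith
    · refine lt_of_pow_lt_pow_left₀ 2 hqn.le ?_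
      have : ω₁ ^ 2 < (2 * κ * s) ^ 2 := pow_lt_pow_left₀ h h0.le two_ne_zero
      nlinarith [mul_pos hS (sub_pos.mpr this)]
  have hgt : 2 * κ * s < ω₁ → ξh⁻¹ < ω₁ / (q * n) := fun h => by
    rw [lt_div_iff₀ hqn, ← div_eq_inv_mul, div_lt_iff₀ hξ0]
    have h0 : 0 < ω₁ := hks.trans h
    refine lt_of_pow_lt_pow_left₀ 2 (by positivity) ?_
    have : (2 * κ * s) ^ 2 < ω₁ ^ 2 := pow_lt_pow_left₀ h hks.le two_ne_zero
    nlinarith [mul_pos hS (sub_pos.mpr this)]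
  have heq : ω₁ = 2 * κ * s → ω₁ / (q * n) = ξh⁻¹ := fun h => by
    have h0 : 0 < ω₁ := h ▸ hks
    rw [div_eq_iff hqn.ne', ← div_eq_inv_mul, eq_div_iff hξ0.ne']
    refine (pow_left_inj₀ (by positivity) hqn.le two_ne_zero).mp ?_
    rw [← h, sub_self, mul_zero] at hfac
    linarith
  generalize ω₁ / (q * n) = y at *
  have hc : 0 < n / q ^ 2 := by positivity
  have hγ' : 0 < q ^ 2 - 1 := by linarith
  nth_rewrite 1 3 [← hg]
  rw [← mul_sub]
  rcases lt_trichotomy ω₁ (2 * κ * s) with h | h | h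
  · have hpos := mul_pos hc (mul_pos hγ' (sub_pos.mpr (mul_arctan_lt hY (hlt h))))
    exact ⟨iff_of_true hpos h, iff_of_false hpos.not_gt h.not_gt⟩
  · rw [heq h, sub_self, mul_zero, mul_zero]
    exact ⟨iff_of_false (lt_irrefl _) h.not_lt, iff_of_false (lt_irrefl _) h.not_gt⟩
  · have hneg := mul_neg_of_pos_of_neg hc (mul_neg_of_pos_of_neg hγ'
      (sub_neg.mpr (mul_arctan_lt (hY.trans (hgt h)) (hgt h))))
    exact ⟨iff_of_false hneg.not_gt h.not_gt, iff_of_true hneg h⟩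

end
end

section
/- Let b > 0, γ = 1 + 16b/3, and let ω = (ω₀, ω₁) ∈ Ω with ω₁ > 0. Then the function t ↦ Q₀(φ_{(t, ω₁)}), defined for t > ω₁²/4, is differentiable at t = ω₀ with derivative equal to −4ω₁ / (√(4ω₀ − ω₁²)·(γ(4ω₀ − ω₁²) + ω₁²)); in particular this derivative is negative. -/
/-!
Since the exponential factor in `phi` has modulus one, `Q0 (phi b t ω₁) = (1/2) ∫ phit²`. With
`s = 4t - ω₁²`, `κ = √s`, `A = √(ω₁² + γ s)` and `c = √γ κ` (so `A² = ω₁² + c²`), the integrand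
`phit² = 2s / (A cosh (κx) - ω₁)` has the antiderivative
`(4/√γ) arctan ((A exp (κx) - ω₁) / c)`, whence the closed form
`Q0 (phi b t ω₁) = (2/√γ) (π/2 + arctan (ω₁ / (√γ κ)))` (`Q0_phi`). Differentiating it in `t`
gives the claim.
-/

open MeasureTheory

noncomputable section

open Filter Topology

/-- The fundamental theorem of calculus on the whole line for a nonnegative derivative: integrability
of `f'` is automatic, being obtained on each half-line from the limit of `f` there. -/
lemma integral_deriv_of_nonneg_of_tendsto {f f' : ℝ → ℝ} {m n : ℝ}
    (hderiv : ∀ x, HasDerivAt f (f' x) x) (hpos : ∀ x, 0 ≤ f' x)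
    (hbot : Tendsto f atBot (𝓝 m)) (htop : Tendsto f atTop (𝓝 n)) :
    ∫ x, f' x = n - m := by
  refine integral_of_hasDerivAt_of_tendsto hderiv ?_ hbot htop
  have h1 : IntegrableOn f' (Set.Ioi 0) :=
    integrableOn_Ioi_deriv_of_nonneg' (fun x _ => hderiv x) (fun x _ => hpos x) htop
  have h2 : IntegrableOn (fun x => f' (-x)) (Set.Ioi 0) := by
    have hd : ∀ x, HasDerivAt (fun x => -f (-x)) (f' (-x)) x := fun x => by
      refine ((hderiv (-x)).comp x (hasDerivAt_neg x)).neg.congr_deriv ?_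
      ring
    exact integrableOn_Ioi_deriv_of_nonneg' (fun x _ => hd x) (fun x _ => hpos _)
      (hbot.comp tendsto_neg_atTop_atBot).neg
  have h3 : IntegrableOn f' (Set.Iic 0) := by
    rw [integrableOn_Iic_iff_integrableOn_Iio]
    have h4 := (Measure.measurePreserving_neg (volume : Measure ℝ)).integrableOn_comp_preimage
      (Homeomorph.neg ℝ).measurableEmbedding (f := f') (s := Set.Iio 0)
    rw [← h4]
    simpa [Function.comp_def] using h2
  rw [← integrableOn_univ, ← Set.Iic_union_Ioi (a := (0 : ℝ))]
  exact h3.union h1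

/-- Up to the factor `c * k / 2`, the antiderivative of `1 / (A cosh (kx) - w)` when
`A² = w² + c²`. -/
lemma hasDerivAt_arctan_exp {A w c k : ℝ} (hc : 0 < c) (hA : A ^ 2 = w ^ 2 + c ^ 2)
    (hwA : w < A) (hA0 : 0 < A) (x : ℝ) :
    HasDerivAt (fun x => Real.arctan ((A * Real.exp (k * x) - w) / c))
      (c * k / 2 / (-w + A * Real.cosh (k * x))) x := by
  have h1 : HasDerivAt (fun x => (A * Real.exp (k * x) - w) / c)
      (A * (Real.exp (k * x) * k) / c) x := by
    have h0 : HasDerivAt (fun x : ℝ => k * x) k x := by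
      simpa using (hasDerivAt_id x).const_mul k
    exact ((h0.exp.const_mul A).sub_const w).div_const c
  refine h1.arctan.congr_deriv ?_
  have hcosh := Real.one_le_cosh (k * x)
  have hD : 0 < -w + A * Real.cosh (k * x) := by
    nlinarith [hwA]
  have he : 0 < Real.exp (k * x) := Real.exp_pos _
  have hE : c ^ 2 + (A * Real.exp (k * x) - w) ^ 2 =
      2 * A * Real.exp (k * x) * (-w + A * Real.cosh (k * x)) := by
    rw [Real.cosh_eq, Real.exp_neg]
    field_simp
    linear_combination -hA
  have hE' : 1 + ((A * Real.exp (k * x) - w) / c) ^ 2 =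
      2 * A * Real.exp (k * x) * (-w + A * Real.cosh (k * x)) / c ^ 2 := by
    rw [← hE]
    field_simp
  rw [hE']
  field_simp

lemma gam_pos {b : ℝ} (hb : 0 < b) : 0 < gam b := by
  unfold gam
  positivity

lemma norm_phi_sq_s9 {b t w : ℝ} (x : ℝ) : ‖phi b t w x‖ ^ 2 = phit b t w x ^ 2 := by
  have h : Complex.I * (w / 2) * x -
      (Complex.I / 4) * ((∫ η in Set.Iic x, (phit b t w η) ^ 2) : ℝ) =
      ((w / 2 * x - (∫ η in Set.Iic x, (phit b t w η) ^ 2) / 4 : ℝ) : ℂ) * Complex.I := by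
    push_cast
    ring
  rw [phi, h, norm_mul, Complex.norm_exp_ofReal_mul_I, mul_one, Complex.norm_real, Real.norm_eq_abs,
    sq_abs]

/-- The mass of the solitary wave in closed form. -/
lemma Q0_phi {b t w : ℝ} (hb : 0 < b) (ht : w ^ 2 < 4 * t) :
    Q0 (phi b t w) = 2 / Real.sqrt (gam b) *
      (Real.pi / 2 + Real.arctan (w / (Real.sqrt (gam b) * Real.sqrt (4 * t - w ^ 2)))) := by
  have hg := gam_pos hb
  have hs : 0 < 4 * t - w ^ 2 := by linarith
  set g := Real.sqrt (gam b) with hgdef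
  set k := Real.sqrt (4 * t - w ^ 2) with hkdef
  set A := Real.sqrt (w ^ 2 + gam b * (4 * t - w ^ 2)) with hAdef
  have hg0 : 0 < g := Real.sqrt_pos.2 hg
  have hk0 : 0 < k := Real.sqrt_pos.2 hs
  have hg2 : g ^ 2 = gam b := Real.sq_sqrt hg.le
  have hk2 : k ^ 2 = 4 * t - w ^ 2 := Real.sq_sqrt hs.le
  have hA0 : 0 < A := Real.sqrt_pos.2 (by positivity)
  have hA2 : A ^ 2 = w ^ 2 + (g * k) ^ 2 := by
    rw [mul_pow, hg2, hk2]
    exact Real.sq_sqrt (by positivity)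
  have hc : 0 < g * k := mul_pos hg0 hk0
  have hAw : w < A := lt_of_pow_lt_pow_left₀ 2 hA0.le (by nlinarith [pow_pos hc 2])
  have hden : ∀ x, 0 < -w + A * Real.cosh (k * x) := fun x => by
    nlinarith [Real.one_le_cosh (k * x)]
  have hint : ∀ x, ‖phi b t w x‖ ^ 2 = 2 * k ^ 2 / (-w + A * Real.cosh (k * x)) := fun x => by
    rw [norm_phi_sq_s9, phit, Real.sq_sqrt (div_nonneg (by positivity) (hden x).le), hk2]
  have hderiv : ∀ x, HasDerivAt
      (fun x => 4 / g * Real.arctan ((A * Real.exp (k * x) - w) / (g * k)))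
      (2 * k ^ 2 / (-w + A * Real.cosh (k * x))) x := fun x => by
    refine ((hasDerivAt_arctan_exp (k := k) hc hA2 hAw hA0 x).const_mul
      (4 / g)).congr_deriv ?_
    have := (hden x).ne'
    field_simp
    norm_num
  have htop : Tendsto (fun x => 4 / g * Real.arctan ((A * Real.exp (k * x) - w) / (g * k)))
      atTop (𝓝 (4 / g * (Real.pi / 2))) := by
    refine Tendsto.const_mul _ ((Real.tendsto_arctan_atTop.mono_right nhdsWithin_le_nhds).comp ?_)
    refine Tendsto.atTop_div_const hc (tendsto_atTop_add_const_right _ (-w) ?_)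
    exact (Real.tendsto_exp_atTop.comp (tendsto_id.const_mul_atTop hk0)).const_mul_atTop hA0
  have hbot : Tendsto (fun x => 4 / g * Real.arctan ((A * Real.exp (k * x) - w) / (g * k)))
      atBot (𝓝 (4 / g * Real.arctan ((A * 0 - w) / (g * k)))) := by
    refine Tendsto.const_mul _ ((Real.continuous_arctan.tendsto _).comp ?_)
    refine Tendsto.div_const (Tendsto.sub_const (Tendsto.const_mul _ ?_) _) _
    exact Real.tendsto_exp_atBot.comp (tendsto_id.const_mul_atBot hk0)
  have hI := integral_deriv_of_nonneg_of_tendsto hderiv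
    (fun x => div_nonneg (by positivity) (hden x).le) hbot htop
  rw [Q0]
  simp only [hint]
  rw [hI, mul_zero, zero_sub, neg_div, Real.arctan_neg]
  ring

theorem stmt9 (b : ℝ) (hb : 0 < b) (ω₀ ω₁ : ℝ) (hΩ : ω₁ ^ 2 < 4 * ω₀) (hω₁ : 0 < ω₁) :
    HasDerivAt (fun t : ℝ => Q0 (phi b t ω₁))
      (-4 * ω₁ / (Real.sqrt (4 * ω₀ - ω₁ ^ 2) * (gam b * (4 * ω₀ - ω₁ ^ 2) + ω₁ ^ 2))) ω₀ ∧
    -4 * ω₁ / (Real.sqrt (4 * ω₀ - ω₁ ^ 2) * (gam b * (4 * ω₀ - ω₁ ^ 2) + ω₁ ^ 2)) < 0 := by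
  have hg := gam_pos hb
  have hs : 0 < 4 * ω₀ - ω₁ ^ 2 := by linarith
  have hk0 : 0 < Real.sqrt (4 * ω₀ - ω₁ ^ 2) := Real.sqrt_pos.2 hs
  refine ⟨?_, div_neg_of_neg_of_pos (by linarith) (by positivity)⟩
  have hev : (fun t : ℝ => Q0 (phi b t ω₁)) =ᶠ[𝓝 ω₀] fun t => 2 / Real.sqrt (gam b) *
      (Real.pi / 2 +
        Real.arctan (ω₁ / (Real.sqrt (gam b) * Real.sqrt (4 * t - ω₁ ^ 2)))) := by
    filter_upwards [lt_mem_nhds (show ω₁ ^ 2 / 4 < ω₀ by linarith)] with t ht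
    exact Q0_phi hb (by linarith)
  refine HasDerivAt.congr_of_eventuallyEq ?_ hev
  have hg0 : 0 < Real.sqrt (gam b) := Real.sqrt_pos.2 hg
  have hlin : HasDerivAt (fun t : ℝ => 4 * t - ω₁ ^ 2) 4 ω₀ := by
    simpa using ((hasDerivAt_id ω₀).const_mul 4).sub_const (ω₁ ^ 2)
  have hd := ((((hlin.sqrt hs.ne').const_mul (Real.sqrt (gam b))).fun_inv
    (mul_pos hg0 hk0).ne').const_mul ω₁).arctan.const_add (Real.pi / 2)
    |>.const_mul (2 / Real.sqrt (gam b))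
  simp only [← div_eq_mul_inv] at hd
  refine hd.congr_deriv ?_
  have hg2 : Real.sqrt (gam b) ^ 2 = gam b := Real.sq_sqrt hg.le
  have hk2 : Real.sqrt (4 * ω₀ - ω₁ ^ 2) ^ 2 = 4 * ω₀ - ω₁ ^ 2 := Real.sq_sqrt hs.le
  rw [← hk2, Real.sqrt_sq hk0.le, ← hg2, Real.sqrt_sq hg0.le]
  generalize Real.sqrt (4 * ω₀ - ω₁ ^ 2) = k at *
  generalize Real.sqrt (gam b) = g at *
  have : 0 < g ^ 2 * k ^ 2 + ω₁ ^ 2 := by positivity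
  field_simp

end
end
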